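/- The Weierstrass representation data of the Baker–Akhiezer function of the Clifford torus at λ = (1−i)/4 satisfy, for all (x,y) ∈ ℝ²: i·(conj ψ₂)² = −((1+i)/2) e^{ix} (√2 − cos y − sin y)/(sin y − √2)² and ψ₁ · conj(ψ₂) = (√2 i/2)(√2 sin y − 1)/(sin y − √2)², where conj denotes complex conjugation. In particular, up to a rotation of the (x₁,x₂)-plane and the scaling factor 1/⁴√2, these agree with the Weierstrass data ∂(x₁+ix₂) = i (conj ψ₂)², ∂x₃ = ψ₁ conj(ψ₂) of the Clifford torus. -/

import Mathlib

open Real Complex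

/-- First component of the Baker–Akhiezer function of the Clifford torus at
the spectral point λ = (1−i)/4. -/
noncomputable def cliffordPsi₁ : ℝ → ℝ → ℂ := fun x y =>
  ((1 + Complex.I) / 4) * Complex.exp (-Complex.I * (x : ℂ) / 2)
    * (2 * Complex.exp (Complex.I * (y : ℂ) / 2)
        + (Real.sqrt 2 : ℂ) * (1 - Complex.I) * Complex.exp (-Complex.I * (y : ℂ) / 2))
    / ((Real.sin y : ℂ) - (Real.sqrt 2 : ℂ))

/-- Second component of the Baker–Akhiezer function of the Clifford torus at
the spectral point λ = (1−i)/4. -/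
noncomputable def cliffordPsi₂ : ℝ → ℝ → ℂ := fun x y =>
  -((Real.sqrt 2 : ℂ) / 4) * Complex.exp (-Complex.I * (x : ℂ) / 2)
    * (2 * Complex.exp (Complex.I * (y : ℂ) / 2)
        - (Real.sqrt 2 : ℂ) * (1 + Complex.I) * Complex.exp (-Complex.I * (y : ℂ) / 2))
    / ((Real.sin y : ℂ) - (Real.sqrt 2 : ℂ))

/-!
Conjugation exchanges `exp (± I y / 2)`, so both data are quadratic forms in these two exponentials
divided by `(sin y - √2) ^ 2`, and hence trigonometric polynomials in `y` over that denominator.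
For the coefficients `a = 2` and `b = √2 (1 - I)` one has `b ^ 2 = -4 I`, so that `a ^ 2 + b ^ 2`
and `I (b ^ 2 - a ^ 2)` are both `4 (1 - I)`: this is what puts `cos y` and `sin y` on an equal
footing in the first datum.
-/

section HalfAngle

variable (z : ℂ)

theorem exp_I_mul_half_sq : Complex.exp (I * z / 2) ^ 2 = Complex.cos z + I * Complex.sin z := by
  rw [← Complex.exp_nat_mul, mul_comm I (Complex.sin z), ← Complex.exp_mul_I]
  push_cast
  ring_nf

theorem exp_neg_I_mul_half_sq :
    Complex.exp (-I * z / 2) ^ 2 = Complex.cos z - I * Complex.sin z := by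
  simpa [sub_eq_add_neg] using exp_I_mul_half_sq (-z)

theorem exp_I_mul_half_mul_exp_neg_I_mul_half :
    Complex.exp (I * z / 2) * Complex.exp (-I * z / 2) = 1 := by
  rw [neg_mul, neg_div, ← Complex.exp_add, add_neg_cancel, Complex.exp_zero]

variable (a b : ℂ)

theorem mul_exp_sub_mul_exp_sq :
    (a * Complex.exp (-I * z / 2) - b * Complex.exp (I * z / 2)) ^ 2
      = (a ^ 2 + b ^ 2) * Complex.cos z + I * (b ^ 2 - a ^ 2) * Complex.sin z - 2 * a * b := by
  linear_combination a ^ 2 * exp_neg_I_mul_half_sq z + b ^ 2 * exp_I_mul_half_sq z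
    - 2 * a * b * exp_I_mul_half_mul_exp_neg_I_mul_half z

theorem mul_exp_add_mul_exp_mul_mul_exp_sub_mul_exp :
    (a * Complex.exp (I * z / 2) + b * Complex.exp (-I * z / 2))
        * (a * Complex.exp (-I * z / 2) - b * Complex.exp (I * z / 2))
      = a ^ 2 - b ^ 2 - 2 * a * b * I * Complex.sin z := by
  linear_combination (a ^ 2 - b ^ 2) * exp_I_mul_half_mul_exp_neg_I_mul_half z
    + a * b * (exp_neg_I_mul_half_sq z - exp_I_mul_half_sq z)

end HalfAngle

theorem ofReal_sqrt_two_sq : ((√2 : ℝ) : ℂ) ^ 2 = 2 := by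
  exact_mod_cast Real.sq_sqrt zero_le_two

theorem sqrt_two_mul_one_sub_I_sq : ((√2 : ℝ) * (1 - I) : ℂ) ^ 2 = -4 * I := by
  linear_combination (1 - I) ^ 2 * ofReal_sqrt_two_sq + 2 * I_sq

section WeierstrassData

variable (x y : ℝ)

theorem conj_cliffordPsi₂ :
    starRingEnd ℂ (cliffordPsi₂ x y)
      = -((√2 : ℝ) / 4) * Complex.exp (I * x / 2)
          * (2 * Complex.exp (-I * y / 2) - (√2 : ℝ) * (1 - I) * Complex.exp (I * y / 2))
          / ((Real.sin y : ℂ) - (√2 : ℝ)) := by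
  simp only [cliffordPsi₂, map_div₀, map_mul, map_sub, map_neg, map_add, map_one, conj_ofReal,
    ← Complex.exp_conj, conj_I, map_ofNat, neg_neg, ← sub_eq_add_neg]

theorem I_mul_conj_cliffordPsi₂_sq :
    I * starRingEnd ℂ (cliffordPsi₂ x y) ^ 2
      = -((1 + I) / 2) * Complex.exp (I * x) * ((√2 : ℝ) - Real.cos y - Real.sin y)
          / ((Real.sin y : ℂ) - (√2 : ℝ)) ^ 2 := by
  have prefactor_sq : (-((√2 : ℝ) / 4) : ℂ) ^ 2 = 1 / 8 := by
    linear_combination ofReal_sqrt_two_sq / 16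
  have exp_sq : Complex.exp (I * x / 2) ^ 2 = Complex.exp (I * x) := by
    rw [← Complex.exp_nat_mul, Nat.cast_ofNat, mul_div_cancel₀ _ two_ne_zero]
  have bracket_sq :
      (2 * Complex.exp (-I * y / 2) - (√2 : ℝ) * (1 - I) * Complex.exp (I * y / 2)) ^ 2
        = -4 * (1 - I) * ((√2 : ℝ) - Real.cos y - Real.sin y) := by
    rw [mul_exp_sub_mul_exp_sq, sqrt_two_mul_one_sub_I_sq, ofReal_cos, ofReal_sin]
    linear_combination -4 * Complex.sin y * I_sq
  rw [conj_cliffordPsi₂, div_pow, mul_pow, mul_pow, prefactor_sq, exp_sq, bracket_sq,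
    ← mul_div_assoc]
  congr 1
  linear_combination
    (1 / 2) * Complex.exp (I * x) * ((√2 : ℝ) - Real.cos y - Real.sin y) * I_sq

theorem cliffordPsi₁_mul_conj_cliffordPsi₂ :
    cliffordPsi₁ x y * starRingEnd ℂ (cliffordPsi₂ x y)
      = ((√2 : ℝ) * I / 2) * ((√2 : ℝ) * Real.sin y - 1)
          / ((Real.sin y : ℂ) - (√2 : ℝ)) ^ 2 := by
  have bracket_mul :
      (2 * Complex.exp (I * y / 2) + (√2 : ℝ) * (1 - I) * Complex.exp (-I * y / 2))
          * (2 * Complex.exp (-I * y / 2) - (√2 : ℝ) * (1 - I) * Complex.exp (I * y / 2))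
        = -4 * (1 + I) * ((√2 : ℝ) * Real.sin y - 1) := by
    rw [mul_exp_add_mul_exp_mul_mul_exp_sub_mul_exp, sqrt_two_mul_one_sub_I_sq, ofReal_sin]
    linear_combination 4 * (√2 : ℝ) * Complex.sin y * I_sq
  rw [conj_cliffordPsi₂, cliffordPsi₁, div_mul_div_comm, ← sq, mul_mul_mul_comm, bracket_mul,
    mul_mul_mul_comm ((1 + I) / 4), mul_comm (Complex.exp (-I * x / 2)),
    exp_I_mul_half_mul_exp_neg_I_mul_half]
  congr 1
  linear_combination (√2 : ℝ) / 4 * ((√2 : ℝ) * Real.sin y - 1) * I_sq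

end WeierstrassData

/-- The Weierstrass representation data of the Baker–Akhiezer function of the
Clifford torus at λ = (1−i)/4. -/
theorem clifford_torus_weierstrass_data (x y : ℝ) :
    Complex.I * (starRingEnd ℂ (cliffordPsi₂ x y)) ^ 2
      = -((1 + Complex.I) / 2) * Complex.exp (Complex.I * (x : ℂ))
          * ((Real.sqrt 2 : ℂ) - (Real.cos y : ℂ) - (Real.sin y : ℂ))
          / ((Real.sin y : ℂ) - (Real.sqrt 2 : ℂ)) ^ 2 ∧
    cliffordPsi₁ x y * starRingEnd ℂ (cliffordPsi₂ x y)
      = ((Real.sqrt 2 : ℂ) * Complex.I / 2)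
          * ((Real.sqrt 2 : ℂ) * (Real.sin y : ℂ) - 1)
          / ((Real.sin y : ℂ) - (Real.sqrt 2 : ℂ)) ^ 2 :=
  ⟨I_mul_conj_cliffordPsi₂_sq x y, cliffordPsi₁_mul_conj_cliffordPsi₂ x y⟩
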